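/- arXiv:2503.20567 — 2 statements merged into one kernel-verified Lean document; each statement's English description precedes it below -/
import Mathlib

section
/- The subdiagonal entries of X_n = B_n^{-1} A_n satisfy X_n(i+1, i) = -i for i = 2,…,n-1. -/
/-- a_i = -(i+α+1)(i+κ+1) -/
def acoef (α κ : ℝ) (i : ℕ) : ℝ := -(((i : ℝ) + α + 1) * ((i : ℝ) + κ + 1))

/-- b_i = i(2i+α+κ+1)+(i+α+1)(i+κ+1) -/
def bcoef (α κ : ℝ) (i : ℕ) : ℝ :=
  (i : ℝ) * (2 * (i : ℝ) + α + κ + 1) + ((i : ℝ) + α + 1) * ((i : ℝ) + κ + 1)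

/-- c_i = -i(3i+α+κ) -/
def ccoef (α κ : ℝ) (i : ℕ) : ℝ := -((i : ℝ) * (3 * (i : ℝ) + α + κ))

/-- d_i = (i-1)i -/
def dcoef (i : ℕ) : ℝ := ((i : ℝ) - 1) * (i : ℝ)

/-- The banded matrix `A_n` of the four-term recurrence: with 1-based
indices, `A_n(i,i) = b_{i-1}`, `A_n(i,i+1) = a_{i-1}`, `A_n(i+1,i) = c_i`,
`A_n(i+2,i) = d_{i+1}`.  Here `i : Fin n` is the 0-based index, so the
coefficient index coincides with the 0-based row index. -/
def Amat (α κ : ℝ) (n : ℕ) : Matrix (Fin n) (Fin n) ℝ := fun i j =>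
  if (i : ℕ) = (j : ℕ) then bcoef α κ i
  else if (j : ℕ) = (i : ℕ) + 1 then acoef α κ i
  else if (i : ℕ) = (j : ℕ) + 1 then ccoef α κ i
  else if (i : ℕ) = (j : ℕ) + 2 then dcoef i
  else 0

/-- The lower bidiagonal matrix `B_n` with diagonal entries
`e_{i-1} = i` (1-based) and subdiagonal entries `f_i = -i`. -/
def Bmat (n : ℕ) : Matrix (Fin n) (Fin n) ℝ := fun i j =>
  if (i : ℕ) = (j : ℕ) then ((i : ℕ) : ℝ) + 1
  else if (i : ℕ) = (j : ℕ) + 1 then -((i : ℕ) : ℝ)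
  else 0

/-- `X_n = B_n⁻¹ A_n`. -/
noncomputable def Xmat (α κ : ℝ) (n : ℕ) : Matrix (Fin n) (Fin n) ℝ :=
  (Bmat n)⁻¹ * Amat α κ n

/-!
`B_n⁻¹` is the Cesàro averaging matrix, so `X_n(i, j)` is the mean of the first `i` entries of
column `j` of `A_n` (1-based). A column of `A_n` carrying the full band `a, b, c, d` sums to zero,
hence stopping just before its last entry `d_{i+1} = i (i + 1)` leaves `-i (i + 1)`, and dividing
by the row index `i + 1` gives `-i`.
-/

/-- The Cesàro matrix, which replaces a vector by the averages of its initial segments; it is the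
inverse of `Bmat n`. Indices are 0-based, so row `i` averages `i + 1` entries. -/
noncomputable def cesaroMat (n : ℕ) : Matrix (Fin n) (Fin n) ℝ := fun i j =>
  if j ≤ i then 1 / ((i : ℝ) + 1) else 0

section

variable {n : ℕ} {ι : Type*} (M : Matrix (Fin n) ι ℝ)

theorem cesaroMat_mul_apply (i : Fin n) (j : ι) :
    (cesaroMat n * M) i j = (∑ k ∈ Finset.Iic i, M k j) / ((i : ℝ) + 1) := by
  simp only [Matrix.mul_apply, cesaroMat, ite_mul, zero_mul, ← Finset.sum_filter,
    Finset.filter_ge_eq_Iic, one_div_mul_eq_div, Finset.sum_div]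

-- For `i = 0` the truncated index `i - 1 = 0` is harmless, its coefficient being zero.
theorem Bmat_mul_apply (i : Fin n) (j : ι) :
    (Bmat n * M) i j =
      ((i : ℝ) + 1) * M i j - (i : ℝ) * M ⟨(i : ℕ) - 1, by omega⟩ j := by
  have Bmat_row (k : Fin n) : Bmat n i k =
      (if k = i then (i : ℝ) + 1 else 0) -
        (if k = ⟨(i : ℕ) - 1, by omega⟩ then (i : ℝ) else 0) := by
    rcases i with ⟨_ | i, hi⟩ <;> simp only [Bmat, Fin.ext_iff] <;> grind
  simp [Matrix.mul_apply, Bmat_row, sub_mul, Finset.sum_sub_distrib]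

end

theorem Bmat_mul_cesaroMat (n : ℕ) : Bmat n * cesaroMat n = 1 := by
  ext ⟨i, hi⟩ ⟨k, hk⟩
  rw [Bmat_mul_apply]
  rcases i with _ | i
  · simp [cesaroMat, Matrix.one_apply, eq_comm]
  · simp only [cesaroMat, Matrix.one_apply, Fin.mk_le_mk, Fin.mk.injEq, Nat.add_sub_cancel,
      Nat.cast_add, Nat.cast_one]
    grind

theorem inv_Bmat (n : ℕ) : (Bmat n)⁻¹ = cesaroMat n :=
  Matrix.inv_eq_right_inv (Bmat_mul_cesaroMat n)

theorem Xmat_apply (α κ : ℝ) {n : ℕ} (i j : Fin n) :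
    Xmat α κ n i j = (∑ k ∈ Finset.Iic i, Amat α κ n k j) / ((i : ℝ) + 1) := by
  rw [Xmat, inv_Bmat, cesaroMat_mul_apply]

theorem acoef_add_bcoef_add_ccoef (α κ : ℝ) (m : ℕ) :
    acoef α κ m + bcoef α κ (m + 1) + ccoef α κ (m + 2) = -dcoef (m + 3) := by
  simp only [acoef, bcoef, ccoef, dcoef]
  push_cast
  ring

theorem sum_Iic_Amat_subdiagonal (α κ : ℝ) {n m : ℕ} (hm : m + 2 < n) :
    ∑ k ∈ Finset.Iic (⟨m + 2, hm⟩ : Fin n), Amat α κ n k ⟨m + 1, by omega⟩ =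
      acoef α κ m + bcoef α κ (m + 1) + ccoef α κ (m + 2) := by
  have band_subset : ({⟨m, by omega⟩, ⟨m + 1, by omega⟩, ⟨m + 2, hm⟩} : Finset (Fin n)) ⊆
      Finset.Iic ⟨m + 2, hm⟩ := by
    simp [Finset.insert_subset_iff]
  rw [← Finset.sum_subset band_subset]
  · simp [Amat, add_assoc]
  · rintro ⟨k, hk⟩ hk_le hk_band
    simp only [Finset.mem_Iic, Fin.mk_le_mk, Finset.mem_insert, Finset.mem_singleton,
      Fin.mk.injEq] at hk_le hk_band
    simp only [Amat]
    grind

/-- Subdiagonal entries (1-based): `X_n(i+1,i) = -i` for `i = 2,…,n-1`.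
In 0-based indices: row `i`, column `i-1`. -/
theorem Xmat_subdiagonal (α κ : ℝ) (n : ℕ) :
    ∀ i : ℕ, ∀ _h2 : 2 ≤ i, ∀ _hi : i ≤ n - 1,
      Xmat α κ n ⟨i, by omega⟩ ⟨i - 1, by omega⟩ = -(i : ℝ) := by
  intro i h2 hi
  obtain ⟨m, rfl⟩ : ∃ m, i = m + 2 := ⟨i - 2, by omega⟩
  simp only [Nat.add_succ_sub_one]
  rw [Xmat_apply, sum_Iic_Amat_subdiagonal, acoef_add_bcoef_add_ccoef, dcoef]
  push_cast
  field_simp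
  ring
end

section
/- With 𝔏_n as defined by the four-term recurrence, the degree of 𝔏_n is n, and its leading coefficient is η · ∏_{i=0}^{n-1} (e_i / a_i) = η · ∏_{i=0}^{n-1} (i+1)/(-(i+α+1)(i+κ+1)), which is nonzero when α, κ > -1. -/
/-!
Everything in the recurrence except `a_i 𝔏_{i+1}` and `x e_i 𝔏_i`, where `e_i = i + 1`, has degree
at most `i`. Comparing coefficients of `x^(m+1)` for `m ≥ i` therefore leaves only
`a_i [x^(m+1)] 𝔏_{i+1} = e_i [x^m] 𝔏_i`: for `m > i` this propagates the degree bound, and for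
`m = i` it multiplies the top coefficient by `e_i / a_i`.
-/

section FourTerm

open Polynomial

/-- A sequence of polynomials generated from the constant `η` by the four-term recurrence
`x (e_i L_i - f_i L_{i-1}) = a_i L_{i+1} + b_i L_i + c_i L_{i-1} + d_i L_{i-2}` for `i ≥ 0`, with
arbitrary coefficient sequences. The index runs over `ℤ` to accommodate `L_{-1}` and `L_{-2}`; the
values at indices below `-2` are unconstrained. -/
structure IsFourTermSequence {R : Type*} [CommRing R] (e f a b c d : ℕ → R) (η : R)
    (L : ℤ → R[X]) : Prop where
  neg_two : L (-2) = 0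
  neg_one : L (-1) = 0
  zero : L 0 = C η
  recurrence : ∀ i : ℕ,
    X * (C (e i) * L i - C (f i) * L ((i : ℤ) - 1)) =
      C (a i) * L ((i : ℤ) + 1) + C (b i) * L i + C (c i) * L ((i : ℤ) - 1) +
        C (d i) * L ((i : ℤ) - 2)

namespace IsFourTermSequence

section CommRing

variable {R : Type*} [CommRing R] {e f a b c d : ℕ → R} {η : R} {L : ℤ → R[X]}

theorem mul_coeff_succ (hL : IsFourTermSequence e f a b c d η L) {i m : ℕ} (him : i ≤ m)
    (hvanish : ∀ j : ℤ, -2 ≤ j → j ≤ i → ∀ k : ℕ, j < k → (L j).coeff k = 0) :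
    a i * (L ((i : ℤ) + 1)).coeff (m + 1) = e i * (L i).coeff m := by
  have hcoeff := congrArg (coeff · (m + 1)) (hL.recurrence i)
  simp only [coeff_X_mul, coeff_add, coeff_sub, coeff_C_mul] at hcoeff
  rw [hvanish (i - 1) (by lia) (by lia) m (by lia),
    hvanish i (by lia) le_rfl (m + 1) (by lia),
    hvanish (i - 1) (by lia) (by lia) (m + 1) (by lia),
    hvanish (i - 2) (by lia) (by lia) (m + 1) (by lia)] at hcoeff
  linear_combination -hcoeff

theorem coeff_eq_zero_of_lt [NoZeroDivisors R] (hL : IsFourTermSequence e f a b c d η L)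
    (ha : ∀ i, a i ≠ 0) (n : ℕ) :
    ∀ j : ℤ, -2 ≤ j → j ≤ n → ∀ m : ℕ, j < m → (L j).coeff m = 0 := by
  induction n with
  | zero =>
    intro j hj_lower hj_upper m hjm
    obtain rfl | rfl | rfl : j = -2 ∨ j = -1 ∨ j = 0 := by lia
    · rw [hL.neg_two, coeff_zero]
    · rw [hL.neg_one, coeff_zero]
    · rw [hL.zero, coeff_C_of_ne_zero (by lia)]
  | succ n ih =>
    intro j hj_lower hj_upper m hjm
    obtain hjn | rfl : j ≤ n ∨ j = n + 1 := by lia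
    · exact ih j hj_lower hjn m hjm
    · obtain ⟨k, rfl⟩ : ∃ k, m = k + 1 := Nat.exists_eq_add_one.mpr (by lia)
      have hmul : a n * (L ((n : ℤ) + 1)).coeff (k + 1) = 0 := by
        rw [hL.mul_coeff_succ (by lia) ih, ih n (by lia) le_rfl k (by lia), mul_zero]
      exact (mul_eq_zero.mp hmul).resolve_left (ha n)

theorem natDegree_le [NoZeroDivisors R] (hL : IsFourTermSequence e f a b c d η L)
    (ha : ∀ i, a i ≠ 0) (n : ℕ) : (L n).natDegree ≤ n :=
  natDegree_le_iff_coeff_eq_zero.mpr fun m hnm =>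
    hL.coeff_eq_zero_of_lt ha n n (by lia) le_rfl m (by exact_mod_cast hnm)

end CommRing

theorem coeff_self {K : Type*} [Field K] {e f a b c d : ℕ → K} {η : K} {L : ℤ → K[X]}
    (hL : IsFourTermSequence e f a b c d η L) (ha : ∀ i, a i ≠ 0) (n : ℕ) :
    (L n).coeff n = η * ∏ i ∈ Finset.range n, e i / a i := by
  induction n with
  | zero => simp [hL.zero]
  | succ n ih =>
    have hstep := hL.mul_coeff_succ le_rfl (hL.coeff_eq_zero_of_lt ha n)
    calc (L (n + 1 : ℕ)).coeff (n + 1)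
        = (L n).coeff n * (e n / a n) := by
          rw [Nat.cast_succ, ← mul_div_assoc, eq_div_iff (ha n)]
          linear_combination hstep
      _ = η * ∏ i ∈ Finset.range (n + 1), e i / a i := by
          rw [ih, Finset.prod_range_succ, mul_assoc]

end IsFourTermSequence

theorem degree_and_leadingCoeff_general {K : Type*} [Field K] {e f a b c d : ℕ → K} {η : K}
    {L : ℤ → K[X]} (hL : IsFourTermSequence e f a b c d η L) (hη : η ≠ 0) (ha : ∀ i, a i ≠ 0)
    (he : ∀ i, e i ≠ 0) (n : ℕ) :
    (L n).natDegree = n ∧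
    (L n).leadingCoeff = η * ∏ i ∈ Finset.range n, e i / a i ∧
    (L n).leadingCoeff ≠ 0 := by
  have hcoeff := hL.coeff_self ha n
  have hne : (L n).coeff n ≠ 0 := by
    rw [hcoeff]
    exact mul_ne_zero hη (Finset.prod_ne_zero_iff.mpr fun i _ => div_ne_zero (he i) (ha i))
  have hdeg : (L n).natDegree = n :=
    natDegree_eq_of_le_of_coeff_ne_zero (hL.natDegree_le ha n) hne
  rw [leadingCoeff, hdeg]
  exact ⟨rfl, hcoeff, hne⟩

end FourTerm

theorem acoef_ne_zero {α κ : ℝ} (hα : -1 < α) (hκ : -1 < κ) (i : ℕ) : acoef α κ i ≠ 0 := by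
  have hα_pos : 0 < (i : ℝ) + α + 1 := by linarith [i.cast_nonneg (α := ℝ)]
  have hκ_pos : 0 < (i : ℝ) + κ + 1 := by linarith [i.cast_nonneg (α := ℝ)]
  exact neg_ne_zero.mpr (mul_pos hα_pos hκ_pos).ne'

open Polynomial in
/-- The polynomial `𝔏_n` defined by the four-term recurrence has degree `n`
and leading coefficient `η ∏_{i=0}^{n-1} (i+1)/(-(i+α+1)(i+κ+1))`, which is
nonzero when `α, κ > -1`. -/
theorem degree_and_leadingCoeff (α κ η : ℝ) (hα : -1 < α) (hκ : -1 < κ) (hη : η ≠ 0)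
    (L : ℤ → Polynomial ℝ)
    (hm2 : L (-2) = 0) (hm1 : L (-1) = 0) (h0 : L 0 = C η)
    (hrec : ∀ i : ℕ,
      X * (C ((i : ℝ) + 1) * L (i : ℤ) - C (i : ℝ) * L ((i : ℤ) - 1)) =
        C (acoef α κ i) * L ((i : ℤ) + 1) + C (bcoef α κ i) * L (i : ℤ) +
          C (ccoef α κ i) * L ((i : ℤ) - 1) + C (dcoef i) * L ((i : ℤ) - 2))
    (n : ℕ) :
    (L (n : ℤ)).natDegree = n ∧
    (L (n : ℤ)).leadingCoeff =
      η * ∏ i ∈ Finset.range n, (((i : ℝ) + 1) / (-(((i : ℝ) + α + 1) * ((i : ℝ) + κ + 1)))) ∧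
    (L (n : ℤ)).leadingCoeff ≠ 0 := by
  have hL : IsFourTermSequence (fun i => (i : ℝ) + 1) (fun i => (i : ℝ)) (acoef α κ) (bcoef α κ)
      (ccoef α κ) dcoef η L := ⟨hm2, hm1, h0, hrec⟩
  exact degree_and_leadingCoeff_general hL hη (acoef_ne_zero hα hκ) Nat.cast_add_one_ne_zero n
end
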